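/- arXiv:math/0603117 — 4 statements merged into one kernel-verified Lean document; each statement's English description precedes it below -/
import Mathlib

section
/- Let ν ≥ 3 be an odd integer and η ∈ ℝ. Then the function v(x) = exp(η x − x^{ν+1}/(ν(ν+1))) is everywhere positive, is square-integrable on ℝ, and satisfies −v''(x) + (η − x^ν/ν)² v(x) − x^{ν−1} v(x) = 0 for all x ∈ ℝ. (Hence for odd ν the bottom eigenvalue λ₀(η) of the pilot-model operator a⁰(η) with l = 0 is identically 0; part of Proposition A.7(i).) -/
/-!
With `f x = η x - x^(ν+1)/(ν(ν+1))` one has `f' x = η - x^ν/ν` and `f'' x = -x^(ν-1)`, so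
`v = exp f` satisfies `v'' = (f'' + f' ^ 2) v`, which is the differential equation.

For square-integrability, `ν + 1` is even and at least `2`, so `x^(ν+1) ≥ x² - 1`. With
`c = 2/(ν(ν+1))`, completing the square gives
`2 f x ≤ (c + 2η²/c) - (c/2) x²`, and `v²` is dominated by a multiple of a Gaussian.
-/

open MeasureTheory

lemma sq_sub_one_le_pow_of_even {n : ℕ} (hn : Even n) (hn0 : n ≠ 0) (x : ℝ) :
    x ^ 2 - 1 ≤ x ^ n := by
  obtain ⟨k, rfl⟩ := hn
  have hk : k ≠ 0 := by omega
  rw [← two_mul, pow_mul]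
  rcases le_total (x ^ 2) 1 with h | h
  · have : 0 ≤ (x ^ 2) ^ k := by positivity
    linarith
  · have := le_self_pow₀ h hk
    linarith

lemma integrable_exp_linear_sub_even_pow {n : ℕ} (hn : Even n) (hn0 : n ≠ 0) (b : ℝ) {c : ℝ}
    (hc : 0 < c) : Integrable (fun x : ℝ => Real.exp (2 * b * x - c * x ^ n)) volume := by
  refine ((integrable_exp_neg_mul_sq (half_pos hc)).const_mul
    (Real.exp (c + 2 * b ^ 2 / c))).mono' (by fun_prop) (Filter.Eventually.of_forall fun x => ?_)
  rw [Real.norm_eq_abs, Real.abs_exp, ← Real.exp_add, Real.exp_le_exp]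
  have h1 := mul_le_mul_of_nonneg_left (sq_sub_one_le_pow_of_even hn hn0 x) hc.le
  have h2 : 0 ≤ c / 2 * (x - 2 * b / c) ^ 2 := by positivity
  have h3 : c / 2 * (x - 2 * b / c) ^ 2 = c / 2 * x ^ 2 - 2 * b * x + 2 * b ^ 2 / c := by
    field_simp
    ring
  linarith

/-- For odd `ν ≥ 3`, the function
`v x = exp (η x - x^(ν+1)/(ν(ν+1)))` is positive, square-integrable, and
annihilated by the pilot-model operator `a⁰(η)` with `l = 0`; hence the bottom
eigenvalue `λ₀(η)` is identically `0` (part of Proposition A.7(i)). -/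
theorem statement1 (ν : ℕ) (hν : 3 ≤ ν) (hodd : Odd ν) (η : ℝ)
    (v : ℝ → ℝ)
    (hv : ∀ x, v x = Real.exp (η * x - x ^ (ν + 1) / (ν * (ν + 1)))) :
    (∀ x, 0 < v x) ∧
    Integrable (fun x => v x ^ 2) volume ∧
    (∀ x, -(deriv (deriv v) x) + (η - x ^ ν / ν) ^ 2 * v x - x ^ (ν - 1) * v x = 0) := by
  have hν0 : (0 : ℝ) < ν := by exact_mod_cast (by omega : 0 < ν)
  have hν1 : (0 : ℝ) < (ν : ℝ) + 1 := by positivity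
  refine ⟨fun x => by rw [hv]; exact Real.exp_pos _, ?_, ?_⟩
  · have h := integrable_exp_linear_sub_even_pow (n := ν + 1) hodd.add_one (by omega) η
      (c := 2 / (ν * (ν + 1))) (by positivity)
    refine h.congr (Filter.Eventually.of_forall fun x => ?_)
    simp only [hv, ← Real.exp_nat_mul]
    congr 1
    push_cast
    ring
  · have hd : ∀ x, HasDerivAt v ((η - x ^ ν / ν) * v x) x := by
      intro x
      have h : HasDerivAt (fun x => Real.exp (η * x - x ^ (ν + 1) / (ν * (ν + 1))))
          (Real.exp (η * x - x ^ (ν + 1) / (ν * (ν + 1))) *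
            (η * 1 - ((ν + 1 : ℕ) : ℝ) * x ^ ν / (ν * (ν + 1)))) x :=
        ((((hasDerivAt_id x).const_mul η).sub
          ((hasDerivAt_pow (ν + 1) x).div_const ((ν : ℝ) * (ν + 1)))).exp)
      rw [funext hv]
      convert h using 1
      push_cast
      field_simp
    have hd' : deriv v = fun x => (η - x ^ ν / ν) * v x := funext fun x => (hd x).deriv
    intro x
    have h2 := ((((hasDerivAt_pow ν x).div_const (ν : ℝ)).const_sub η).mul (hd x)).deriv
    have h3 : deriv (deriv v) x = -(ν * x ^ (ν - 1) / ν) * v x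
        + (η - x ^ ν / ν) * ((η - x ^ ν / ν) * v x) := by
      rw [hd']
      exact h2
    rw [h3, mul_div_cancel_left₀ _ hν0.ne']
    ring
end

section
/- Let ν ≥ 2 be an integer, η ∈ ℝ, μ > 0, h > 0, and let α : ℝ → ℝ be a continuously differentiable function. Set w(x) = η − μ x^ν/ν. Then for every compactly supported continuously differentiable real-valued u : ℝ → ℝ one has the exact identity ∫_ℝ [ h² α(x)² u'(x)² + α(x)^{−2} w(x)² u(x)² − μ h x^{ν−1} u(x)² ] dx = ∫_ℝ ( h α(x) u'(x) − α(x)^{−1} w(x) u(x) )² dx, and in particular the left-hand side is nonnegative. (Nonnegativity of the quadratic form of the l = 0 operator 𝓑(y,η) of (A-16).) -/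
/-!
Expanding the square, the cross term is `-2 h w u u'`, in which `α` cancels. Since
`w' = -μ x^(ν-1)`, the integrand of the quadratic form minus the square is exactly
`2 h w u u' - μ h x^(ν-1) u² = (h w u²)'`, the derivative of a compactly supported `C¹`
function, whose integral over `ℝ` vanishes. Nonnegativity is then immediate.
-/

open MeasureTheory

/-- Nonnegativity of the quadratic form of the `l = 0`
divergence-form magnetic model operator `𝓑(y,η)` of (A-16): for compactly
supported `C¹` real `u`, the quadratic form equals `∫ (hαu' - α⁻¹wu)² ≥ 0`. -/
theorem statement2 (ν : ℕ) (hν : 2 ≤ ν) (η μ h : ℝ) (hμ : 0 < μ) (hh : 0 < h)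
    (α : ℝ → ℝ) (hα : ContDiff ℝ 1 α) (hαpos : ∀ x, 0 < α x)
    (w : ℝ → ℝ) (hw : ∀ x, w x = η - μ * x ^ ν / ν)
    (u : ℝ → ℝ) (hu : ContDiff ℝ 1 u) (hsupp : HasCompactSupport u) :
    (∫ x, (h ^ 2 * α x ^ 2 * deriv u x ^ 2 + (α x)⁻¹ ^ 2 * w x ^ 2 * u x ^ 2
        - μ * h * x ^ (ν - 1) * u x ^ 2))
      = (∫ x, (h * α x * deriv u x - (α x)⁻¹ * w x * u x) ^ 2) ∧
    0 ≤ ∫ x, (h ^ 2 * α x ^ 2 * deriv u x ^ 2 + (α x)⁻¹ ^ 2 * w x ^ 2 * u x ^ 2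
        - μ * h * x ^ (ν - 1) * u x ^ 2) := by
  have hν0 : (ν : ℝ) ≠ 0 := by positivity
  have hwd : ∀ x, HasDerivAt w (-(μ * x ^ (ν - 1))) x := fun x => by
    rw [funext hw]
    refine ((((hasDerivAt_pow ν x).const_mul μ).div_const (ν : ℝ)).const_sub η).congr_deriv ?_
    field_simp
  have hwc : Continuous w := continuous_iff_continuousAt.2 fun x => (hwd x).continuousAt
  have hud : ∀ x, HasDerivAt u (deriv u x) x := fun x =>
    (hu.differentiable one_ne_zero x).hasDerivAt
  have hαc : Continuous α := hα.continuous
  have hαi : Continuous fun x => (α x)⁻¹ := hαc.inv₀ fun x => (hαpos x).ne'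
  have huc : Continuous u := hu.continuous
  have hduc : Continuous (deriv u) := hu.continuous_deriv le_rfl
  -- The two integrands differ by the derivative of the compactly supported `h w u²`.
  have hF : ∀ x, HasDerivAt (fun x => h * (w x * u x ^ 2))
      (2 * h * w x * u x * deriv u x - μ * h * x ^ (ν - 1) * u x ^ 2) x := fun x => by
    refine (((hwd x).mul ((hud x).pow 2)).const_mul h).congr_deriv ?_
    simp only [Pi.pow_apply]
    push_cast
    ring
  have hzero : ∀ x, x ∉ tsupport u → u x = 0 ∧ deriv u x = 0 := fun x hx =>
    ⟨image_eq_zero_of_notMem_tsupport hx,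
      Function.notMem_support.1 fun hx' => hx (support_deriv_subset hx')⟩
  have hFs : HasCompactSupport fun x => h * (w x * u x ^ 2) :=
    HasCompactSupport.intro hsupp fun x hx => by simp [(hzero x hx).1]
  have hi1 : Integrable fun x =>
      2 * h * w x * u x * deriv u x - μ * h * x ^ (ν - 1) * u x ^ 2 :=
    Continuous.integrable_of_hasCompactSupport (by fun_prop)
      (HasCompactSupport.intro hsupp fun x hx => by simp [(hzero x hx).1])
  have hi2 : Integrable fun x => (h * α x * deriv u x - (α x)⁻¹ * w x * u x) ^ 2 :=
    Continuous.integrable_of_hasCompactSupport (by fun_prop)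
      (HasCompactSupport.intro hsupp fun x hx => by simp [hzero x hx])
  have hFi : Integrable fun x => h * (w x * u x ^ 2) :=
    Continuous.integrable_of_hasCompactSupport (by fun_prop) hFs
  have hint : ∫ x, (2 * h * w x * u x * deriv u x - μ * h * x ^ (ν - 1) * u x ^ 2) = 0 :=
    integral_eq_zero_of_hasDerivAt_of_integrable hF hi1 hFi
  have key : (∫ x, (h ^ 2 * α x ^ 2 * deriv u x ^ 2 + (α x)⁻¹ ^ 2 * w x ^ 2 * u x ^ 2
        - μ * h * x ^ (ν - 1) * u x ^ 2))
      = ∫ x, (h * α x * deriv u x - (α x)⁻¹ * w x * u x) ^ 2 := by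
    rw [← add_zero (∫ x, (h * α x * deriv u x - (α x)⁻¹ * w x * u x) ^ 2), ← hint,
      ← integral_add hi2 hi1]
    refine integral_congr_ae (Filter.Eventually.of_forall fun x => ?_)
    have := (hαpos x).ne'
    simp only
    field_simp
    ring
  exact ⟨key, key ▸ integral_nonneg fun x => sq_nonneg _⟩
end

section
/- Let ν ≥ 3 be an odd integer, η ∈ ℝ, μ > 0, h > 0, and let α : ℝ → ℝ be a continuously differentiable function with c^{−1} ≤ α(x) ≤ c for all x, for some constant c ≥ 1. Define v(x) = exp( h^{−1} ∫₀ˣ α(t)^{−2} (η − μ t^ν/ν) dt ). Then v is everywhere positive, square-integrable on ℝ, and satisfies −h² (α(x)² v'(x))' + α(x)^{−2} (η − μ x^ν/ν)² v(x) − μ h x^{ν−1} v(x) = 0 for all x ∈ ℝ. (Proposition A.7(i): for odd ν the bottom eigenvalue of 𝓑(y,η) is 0.) -/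
/-!
With `P x = η - μ x^ν/ν`, the function `v` solves the first-order equation `h α² v' = P v`.
Differentiating it once more and using `P' = -μ x^(ν-1)` gives the second-order equation, with
`α²` differentiated only through the product `α² v' = h⁻¹ P v`.

For integrability, `w = v²` satisfies `w' = g w` with `g = 2 h⁻¹ α⁻² P`. Since `ν` is odd and
`α ≤ c`, `g x → ∓∞` as `x → ±∞`, so `w` decays at least exponentially on both sides
(`integrableOn_Ioi_of_logDeriv_le`, applied to `w x` and to `w (-x)`).
-/

open MeasureTheory Filter Set

/-- A positive solution of `w' = g w` with `g ≤ -1` near `+∞` is integrable at `+∞`, because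
`w x * exp x` is eventually nonincreasing. -/
lemma integrableOn_Ioi_of_logDeriv_le (w g : ℝ → ℝ) (hpos : ∀ x, 0 < w x)
    (hw : ∀ x, HasDerivAt w (g x * w x) x) (hg : ∀ᶠ x in atTop, g x ≤ -1) :
    IntegrableOn w (Ioi 0) := by
  obtain ⟨R, hR⟩ := eventually_atTop.1 hg
  have hd : ∀ x, HasDerivAt (fun y => w y * Real.exp y)
      (g x * w x * Real.exp x + w x * Real.exp x) x :=
    fun x => (hw x).mul (Real.hasDerivAt_exp x)
  have hanti : AntitoneOn (fun y => w y * Real.exp y) (Ici R) := by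
    apply antitoneOn_of_deriv_nonpos (convex_Ici R)
    · exact fun x _ => (hd x).continuousAt.continuousWithinAt
    · exact fun x _ => (hd x).differentiableAt.differentiableWithinAt
    · intro x hx
      rw [interior_Ici] at hx
      rw [(hd x).deriv]
      have h1 := hR x (le_of_lt hx)
      have h2 : 0 < w x * Real.exp x := mul_pos (hpos x) (Real.exp_pos x)
      nlinarith
  refine integrable_of_isBigO_exp_neg (b := 1) one_pos
    (fun x _ => (hw x).continuousAt.continuousWithinAt) ?_
  refine Asymptotics.IsBigO.of_bound (w R * Real.exp R) ?_
  filter_upwards [eventually_ge_atTop R] with x hx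
  have h1 : w x * Real.exp x ≤ w R * Real.exp R := hanti self_mem_Ici hx hx
  rw [Real.norm_of_nonneg (hpos x).le, Real.norm_of_nonneg (Real.exp_pos _).le, neg_one_mul,
    Real.exp_neg, ← div_eq_mul_inv, le_div_iff₀ (Real.exp_pos x)]
  exact h1

/-- The coefficient `2 h⁻¹ a²` multiplies any `p ≤ -h c²/2` to at most `-1` once `a ≥ c⁻¹`. -/
lemma coeff_mul_le_neg_one {h c a p : ℝ} (hh : 0 < h) (hc : 0 < c) (ha : c⁻¹ ≤ a)
    (hp : p ≤ -(h * c ^ 2 / 2)) : 2 * (h⁻¹ * (a ^ 2 * p)) ≤ -1 := by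
  have h1 : 1 ≤ a ^ 2 * c ^ 2 := by
    rw [← mul_pow]
    exact one_le_pow₀ ((inv_le_iff_one_le_mul₀ hc).1 ha)
  have h2 : a ^ 2 * p ≤ -(h / 2) := by
    have := mul_le_mul_of_nonneg_left hp (sq_nonneg a)
    nlinarith
  have h3 := mul_le_mul_of_nonneg_left h2 (inv_pos.2 hh).le
  have h4 : h⁻¹ * -(h / 2) = -(1 / 2) := by field_simp
  linarith

/-- Proposition A.7(i): for odd `ν ≥ 3` the function
`v x = exp (h⁻¹ ∫₀ˣ α(t)⁻² (η - μ t^ν/ν) dt)` is positive, square-integrable,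
and annihilated by the divergence-form magnetic model operator `𝓑(y,η)` with
`l = 0`; hence the bottom eigenvalue of `𝓑(y,η)` is `0`. -/
theorem statement4 (ν : ℕ) (hν : 3 ≤ ν) (hodd : Odd ν) (η μ h : ℝ)
    (hμ : 0 < μ) (hh : 0 < h)
    (c : ℝ) (hc : 1 ≤ c) (α : ℝ → ℝ) (hα : ContDiff ℝ 1 α)
    (hbd : ∀ x, c⁻¹ ≤ α x ∧ α x ≤ c)
    (v : ℝ → ℝ)
    (hv : ∀ x, v x
      = Real.exp (h⁻¹ * ∫ t in (0:ℝ)..x, (α t)⁻¹ ^ 2 * (η - μ * t ^ ν / ν))) :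
    (∀ x, 0 < v x) ∧
    Integrable (fun x => v x ^ 2) volume ∧
    (∀ x, -(h ^ 2 * deriv (fun y => α y ^ 2 * deriv v y) x)
        + (α x)⁻¹ ^ 2 * (η - μ * x ^ ν / ν) ^ 2 * v x
        - μ * h * x ^ (ν - 1) * v x = 0) := by
  have hc0 : 0 < c := by linarith
  have hαpos : ∀ x, 0 < α x := fun x => (inv_pos.2 hc0).trans_le (hbd x).1
  have hαc : Continuous α := hα.continuous
  have hν0 : (0 : ℝ) < ν := by exact_mod_cast (by omega : 0 < ν)
  have hcont : Continuous fun t : ℝ => (α t)⁻¹ ^ 2 * (η - μ * t ^ ν / ν) :=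
    ((hαc.inv₀ fun x => (hαpos x).ne').pow 2).mul (by fun_prop)
  have hpos : ∀ x, 0 < v x := fun x => by rw [hv]; exact Real.exp_pos _
  have hdv : ∀ x, HasDerivAt v (h⁻¹ * ((α x)⁻¹ ^ 2 * (η - μ * x ^ ν / ν)) * v x) x := by
    intro x
    have h1 := ((hcont.integral_hasStrictDerivAt 0 x).hasDerivAt.const_mul h⁻¹).exp
    rw [← hv x, mul_comm (v x)] at h1
    exact h1.congr_of_eventuallyEq (Eventually.of_forall hv)
  refine ⟨hpos, ?_, ?_⟩
  · have hdw : ∀ x, HasDerivAt (fun y => v y ^ 2)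
        (2 * (h⁻¹ * ((α x)⁻¹ ^ 2 * (η - μ * x ^ ν / ν))) * v x ^ 2) x := by
      intro x
      refine ((hdv x).pow 2).congr_deriv ?_
      push_cast
      ring
    have hpow : Tendsto (fun x : ℝ => μ * x ^ ν / ν) atTop atTop :=
      ((tendsto_pow_atTop (by omega)).const_mul_atTop hμ).atTop_div_const hν0
    have hinv : ∀ x, c⁻¹ ≤ (α x)⁻¹ := fun x => inv_anti₀ (hαpos x) (hbd x).2
    have hright : IntegrableOn (fun y => v y ^ 2) (Ioi 0) := by
      refine integrableOn_Ioi_of_logDeriv_le _ _ (fun x => pow_pos (hpos x) 2) hdw ?_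
      filter_upwards [hpow.eventually_ge_atTop (h * c ^ 2 / 2 + η)] with x hx
      exact coeff_mul_le_neg_one hh hc0 (hinv x) (by linarith)
    have hleft : IntegrableOn (fun y => v (-y) ^ 2) (Ioi 0) := by
      refine integrableOn_Ioi_of_logDeriv_le _
        (fun x => 2 * (h⁻¹ * ((α (-x))⁻¹ ^ 2 * (-η - μ * x ^ ν / ν))))
        (fun x => pow_pos (hpos (-x)) 2) ?_ ?_
      · intro x
        refine ((hdw (-x)).comp x (hasDerivAt_neg x)).congr_deriv ?_
        rw [hodd.neg_pow]
        ring
      · filter_upwards [hpow.eventually_ge_atTop (h * c ^ 2 / 2 - η)] with x hx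
        exact coeff_mul_le_neg_one hh hc0 (hinv (-x)) (by linarith)
    have hleft' : IntegrableOn (fun y => v y ^ 2) (Iic 0) := by
      rw [integrableOn_Iic_iff_integrableOn_Iio]
      have h1 : IntegrableOn (fun y => v (-y) ^ 2) (Ioi (-0)) := by rwa [neg_zero]
      simpa only [neg_neg] using h1.comp_neg_Iio
    rw [← integrableOn_univ, ← Iic_union_Ioi (a := (0 : ℝ))]
    exact hleft'.union hright
  · intro x
    have heq : (fun y => α y ^ 2 * deriv v y)
        = fun y => h⁻¹ * ((η - μ * y ^ ν / ν) * v y) := by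
      funext y
      rw [(hdv y).deriv]
      have := (hαpos y).ne'
      field_simp
    have hP : HasDerivAt (fun y : ℝ => η - μ * y ^ ν / ν) (-(μ * x ^ (ν - 1))) x := by
      refine ((((hasDerivAt_pow ν x).const_mul μ).div_const (ν : ℝ)).const_sub η).congr_deriv ?_
      field_simp
    rw [heq, ((hP.fun_mul (hdv x)).const_mul h⁻¹).deriv]
    field_simp
    ring
end

section
/- Let ν ≥ 2 and l ≥ 0 be integers and let vₙ = (2ⁿ n! √π)^{−1/2} Hₙ(x) e^{−x²/2} be the normalized Hermite functions (vₖ = 0 for k < 0). Define u : ℝ → ℝ by u = −(ν−1)[ (1/48)√((2l+2)(2l+4)(2l+6)) v_{l+3} − (1/16)√(2l+2)(2l−2) v_{l+1} + (1/16)√(2l)(2l+4) v_{l−1} − (1/48)√(2l(2l−2)(2l−4)) v_{l−3} ]. Then: (a) −u''(x) + x² u(x) − (2l+1) u(x) + (ν−1)(x³ − (2l+1)x) v_l(x) = 0 for all x ∈ ℝ; and (b) ∫_ℝ [ (ν−1)( ((7ν−11)/12) x⁴ − ((2l+1)(ν−2)/2) x² ) v_l(x)² + (ν−1)(x³ − (2l+1)x)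 u(x) v_l(x) ] dx = (1/2)(ν−1) l (l+1). In particular this quantity ω₂ is strictly positive when l ≥ 1. (The second-order perturbation coefficient ω₂ = ½(ν−1)l(l+1) computed in the proof of Proposition A.3(i), giving the leading constant κ = ω₂ ν^{−2/ν} > 0 in the asymptotics λ_l(η) = κ η^{−2/ν} + O(η^{−(ν+3)/ν}).) -/
/-!
Write `ψ = hermiteFun l`, `v = ψ / N` for its normalization, and `E = 2l + 1`. The two facts about
Hermite functions that matter are the ladder relations `ψₙ₊₁ = x ψₙ - ψₙ'` and
`ψₙ₊₁' + x ψₙ₊₁ = (2n+2) ψₙ`; they give the oscillator equation `ψ'' = (x² - E) ψ` and, by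
integrating `(ψₙ ψₙ₊₁)'`, the normalization `∫ v² = 1`.

Climbing up or down the ladder from `l` expresses each of `v_{l±1}`, `v_{l±3}` through `ψ` and `ψ'`
with polynomial coefficients, and the corrector collapses to
`u = -(ν-1)/6 · (x v + (E - x²) v')` (`corrector_eq`). The differential equation (a) is then
immediate from `v'' = (x² - E) v`.

For (b) no orthogonality relations are needed: the integrand equals `(ν-1) (E² - 1)/8 · v²` plus
the derivative of an explicit quadratic form `a v² + b v v' + c v'²` with polynomial coefficients
`a, b, c`, and `(E² - 1)/8 = l(l+1)/2`.
-/

open MeasureTheory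

/-- Physicists' Hermite function `ψₙ(x) = Hₙ(x) e^{-x²/2}`, where
`Hₙ(x) = 2^{n/2} Heₙ(√2 x)` and `Heₙ` is the probabilists' Hermite polynomial
(`Polynomial.hermite`). -/
noncomputable def hermiteFun (n : ℕ) (x : ℝ) : ℝ :=
  Real.sqrt 2 ^ n * Polynomial.aeval (Real.sqrt 2 * x) (Polynomial.hermite n)
    * Real.exp (-x ^ 2 / 2)

/-- Normalized Hermite function `vₙ = (2ⁿ n! √π)^{-1/2} ψₙ`. -/
noncomputable def normHermiteFun (n : ℕ) (x : ℝ) : ℝ :=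
  (Real.sqrt (2 ^ n * n.factorial * Real.sqrt Real.pi))⁻¹ * hermiteFun n x

open Polynomial in
lemma derivative_hermite_succ (n : ℕ) :
    derivative (hermite (n + 1)) = ((n : ℤ[X]) + 1) * hermite n := by
  induction n with
  | zero => simp
  | succ n ih =>
    have h : derivative (derivative (hermite (n + 1)))
        = ((n : ℤ[X]) + 1) * derivative (hermite n) := by
      rw [ih]; simp [derivative_mul]
    rw [hermite_succ (n + 1), derivative_sub, derivative_mul, h, ih]
    have h2 := hermite_succ n
    simp only [derivative_X]
    push_cast
    linear_combination (-(n : ℤ[X]) - 1) * h2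

/-- The derivative `ψₙ' = x ψₙ - ψₙ₊₁` of the Hermite function `ψₙ`, given by the raising
relation. -/
noncomputable def hermiteFunDeriv (n : ℕ) (x : ℝ) : ℝ :=
  x * hermiteFun n x - hermiteFun (n + 1) x

lemma hermiteFun_hasDerivAt (n : ℕ) (x : ℝ) :
    HasDerivAt (hermiteFun n) (hermiteFunDeriv n x) x := by
  have h1 : HasDerivAt (fun y : ℝ => Real.sqrt 2 * y) (Real.sqrt 2) x := by
    simpa using (hasDerivAt_id x).const_mul (Real.sqrt 2)
  have h2 := ((Polynomial.hermite n).hasDerivAt_aeval (Real.sqrt 2 * x)).comp x h1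
  have h3 : HasDerivAt (fun y : ℝ => Real.exp (-y ^ 2 / 2)) (Real.exp (-x ^ 2 / 2) * (-x)) x := by
    have : HasDerivAt (fun y : ℝ => -y ^ 2 / 2) (-x) x := by
      refine (((hasDerivAt_id' x).pow 2).neg.div_const 2).congr_deriv ?_
      push_cast
      ring
    exact this.exp
  have h4 := ((h2.const_mul (Real.sqrt 2 ^ n)).mul h3)
  refine h4.congr_deriv ?_
  have hs : Real.sqrt 2 ^ 2 = 2 := Real.sq_sqrt (by norm_num)
  simp only [hermiteFunDeriv, hermiteFun, Polynomial.hermite_succ, map_sub, map_mul,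
    Polynomial.aeval_X, Function.comp]
  linear_combination (x * Real.sqrt 2 ^ n *
    Polynomial.aeval (Real.sqrt 2 * x) (Polynomial.hermite n) * Real.exp (-x ^ 2 / 2)) * hs

lemma hermiteFun_three_term (n : ℕ) (x : ℝ) :
    hermiteFun (n + 2) x = 2 * x * hermiteFun (n + 1) x - (2 * n + 2) * hermiteFun n x := by
  have hs : Real.sqrt 2 ^ 2 = 2 := Real.sq_sqrt (by norm_num)
  have h := congrArg (Polynomial.aeval (Real.sqrt 2 * x)) (Polynomial.hermite_succ (n + 1))
  rw [derivative_hermite_succ] at h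
  simp only [map_sub, map_mul, Polynomial.aeval_X, map_add, map_natCast, map_one] at h
  simp only [hermiteFun, h]
  set s := Real.sqrt 2
  set e := Real.exp (-x ^ 2 / 2)
  set a := Polynomial.aeval (s * x) (Polynomial.hermite (n + 1))
  set b := Polynomial.aeval (s * x) (Polynomial.hermite n)
  linear_combination (s ^ (n + 1) * x * a * e - s ^ n * (n + 1) * b * e) * hs

/-- The oscillator equation `ψₙ'' = (x² - (2n+1)) ψₙ`. -/
lemma hermiteFunDeriv_hasDerivAt (n : ℕ) (x : ℝ) :
    HasDerivAt (hermiteFunDeriv n) ((x ^ 2 - (2 * n + 1)) * hermiteFun n x) x := by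
  refine (((hasDerivAt_id x).mul (hermiteFun_hasDerivAt n x)).sub
    (hermiteFun_hasDerivAt (n + 1) x)).congr_deriv ?_
  simp only [hermiteFunDeriv, hermiteFun_three_term, id]
  ring

/-- A polynomial times `exp (-x²/2)`. Products of two such functions are integrable, and the class
contains all Hermite functions and their derivatives. -/
def IsPolyGaussian (f : ℝ → ℝ) : Prop :=
  ∃ p : Polynomial ℝ, ∀ x, f x = p.eval x * Real.exp (-x ^ 2 / 2)

lemma isPolyGaussian_hermiteFun (n : ℕ) : IsPolyGaussian (hermiteFun n) := by
  refine ⟨Polynomial.C (Real.sqrt 2 ^ n) * ((Polynomial.hermite n).map (Int.castRingHom ℝ)).comp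
    (Polynomial.C (Real.sqrt 2) * Polynomial.X), fun x => ?_⟩
  simp [hermiteFun, Polynomial.eval_comp, Polynomial.eval_map, Polynomial.aeval_def]

lemma isPolyGaussian_hermiteFunDeriv (n : ℕ) : IsPolyGaussian (hermiteFunDeriv n) := by
  obtain ⟨p, hp⟩ := isPolyGaussian_hermiteFun n
  obtain ⟨q, hq⟩ := isPolyGaussian_hermiteFun (n + 1)
  refine ⟨Polynomial.X * p - q, fun x => ?_⟩
  simp only [hermiteFunDeriv, hp, hq, Polynomial.eval_sub, Polynomial.eval_mul, Polynomial.eval_X]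
  ring

lemma integrable_polynomial_mul_gaussian (p : Polynomial ℝ) :
    Integrable (fun x : ℝ => p.eval x * Real.exp (-x ^ 2)) := by
  induction p using Polynomial.induction_on' with
  | add p q hp hq =>
    refine (hp.add hq).congr (Filter.Eventually.of_forall fun x => ?_)
    simp [add_mul]
  | monomial n a =>
    have h := integrable_rpow_mul_exp_neg_mul_sq (b := 1) one_pos (s := n)
      (by have : (0 : ℝ) ≤ n := n.cast_nonneg
          linarith)
    refine (h.const_mul a).congr (Filter.Eventually.of_forall fun x => ?_)
    simp [mul_assoc]

lemma IsPolyGaussian.integrable {f g : ℝ → ℝ} (hf : IsPolyGaussian f) (hg : IsPolyGaussian g)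
    (a b c : Polynomial ℝ) :
    Integrable (fun x : ℝ => a.eval x * f x ^ 2 + b.eval x * (f x * g x) + c.eval x * g x ^ 2) := by
  obtain ⟨p, hp⟩ := hf
  obtain ⟨q, hq⟩ := hg
  refine (integrable_polynomial_mul_gaussian (a * p ^ 2 + b * (p * q) + c * q ^ 2)).congr
    (Filter.Eventually.of_forall fun x => ?_)
  have he : Real.exp (-x ^ 2) = Real.exp (-x ^ 2 / 2) ^ 2 := by
    rw [← Real.exp_nat_mul]; congr 1; push_cast; ring
  simp only [hp, hq, he, Polynomial.eval_add, Polynomial.eval_mul, Polynomial.eval_pow]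
  ring

lemma integrable_hermiteFun_sq (n : ℕ) : Integrable (fun x => hermiteFun n x ^ 2) := by
  simpa using (isPolyGaussian_hermiteFun n).integrable (isPolyGaussian_hermiteFun n) 1 0 0

/-- The raising operator is adjoint to the lowering operator: `(ψₙ ψₙ₊₁)' = (2n+2) ψₙ² - ψₙ₊₁²`
integrates to zero. -/
lemma integral_hermiteFun_sq_succ (n : ℕ) :
    ∫ x, hermiteFun (n + 1) x ^ 2 = (2 * n + 2) * ∫ x, hermiteFun n x ^ 2 := by
  have hd : ∀ x, HasDerivAt (fun x => hermiteFun n x * hermiteFun (n + 1) x)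
      ((2 * n + 2) * hermiteFun n x ^ 2 - hermiteFun (n + 1) x ^ 2) x := fun x => by
    refine ((hermiteFun_hasDerivAt n x).mul (hermiteFun_hasDerivAt (n + 1) x)).congr_deriv ?_
    simp only [hermiteFunDeriv, hermiteFun_three_term]
    ring
  have i1 := (integrable_hermiteFun_sq n).const_mul (2 * (n : ℝ) + 2)
  have i2 := integrable_hermiteFun_sq (n + 1)
  have i3 : Integrable (fun x => hermiteFun n x * hermiteFun (n + 1) x) := by
    simpa using (isPolyGaussian_hermiteFun n).integrable (isPolyGaussian_hermiteFun (n + 1)) 0 1 0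
  have h := integral_eq_zero_of_hasDerivAt_of_integrable hd (i1.sub i2) i3
  rw [integral_sub i1 i2, integral_const_mul] at h
  linarith

lemma integral_hermiteFun_sq (n : ℕ) :
    ∫ x, hermiteFun n x ^ 2 = 2 ^ n * n.factorial * Real.sqrt Real.pi := by
  induction n with
  | zero =>
    have h := integral_gaussian 1
    simp only [div_one] at h
    simp only [pow_zero, Nat.factorial_zero, Nat.cast_one, one_mul]
    rw [← h]
    congr 1
    ext x
    simp only [hermiteFun, Polynomial.hermite_zero, pow_zero, map_one, one_mul]
    rw [← Real.exp_nat_mul]; congr 1; push_cast; ring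
  | succ n ih =>
    rw [integral_hermiteFun_sq_succ, ih, Nat.factorial_succ]
    push_cast
    ring

/-- The normalizing constant `N_n = (2ⁿ n! √π)^{1/2}`, the `L²` norm of `ψₙ`. -/
noncomputable def hermiteNorm (n : ℕ) : ℝ :=
  Real.sqrt (2 ^ n * n.factorial * Real.sqrt Real.pi)

lemma hermiteNorm_pos (n : ℕ) : 0 < hermiteNorm n := by
  unfold hermiteNorm
  have := Real.pi_pos
  positivity

lemma hermiteNorm_sq (n : ℕ) :
    hermiteNorm n ^ 2 = 2 ^ n * n.factorial * Real.sqrt Real.pi :=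
  Real.sq_sqrt (by positivity)

lemma normHermiteFun_eq (n : ℕ) (x : ℝ) :
    normHermiteFun n x = (hermiteNorm n)⁻¹ * hermiteFun n x := rfl

lemma hermiteNorm_succ (n : ℕ) :
    hermiteNorm (n + 1) = Real.sqrt (2 * n + 2) * hermiteNorm n := by
  unfold hermiteNorm
  rw [← Real.sqrt_mul (by positivity), Nat.factorial_succ]
  congr 1
  push_cast
  ring

lemma hermiteNorm_add_three (n : ℕ) :
    hermiteNorm (n + 3)
      = Real.sqrt ((2 * n + 2) * (2 * n + 4) * (2 * n + 6)) * hermiteNorm n := by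
  unfold hermiteNorm
  rw [← Real.sqrt_mul (by positivity)]
  congr 1
  simp only [Nat.factorial_succ]
  push_cast
  ring

lemma sqrt_mul_inv_cancel {s M N : ℝ} (hs : 0 < s) (h : M = Real.sqrt s * N) :
    Real.sqrt s * M⁻¹ = N⁻¹ := by
  have := Real.sqrt_pos.2 hs
  rw [h, mul_inv, ← mul_assoc, mul_inv_cancel₀ this.ne', one_mul]

lemma sqrt_mul_inv_eq_mul {s M N : ℝ} (hs : 0 < s) (h : M = Real.sqrt s * N) :
    Real.sqrt s * N⁻¹ = s * M⁻¹ := by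
  have h1 := Real.sqrt_pos.2 hs
  rw [← sqrt_mul_inv_cancel hs h, ← mul_assoc, Real.mul_self_sqrt hs.le]

lemma sqrt_mul_norm_add_one (l : ℕ) (x : ℝ) :
    Real.sqrt (2 * l + 2) * normHermiteFun (l + 1) x
      = (hermiteNorm l)⁻¹ * (x * hermiteFun l x - hermiteFunDeriv l x) := by
  rw [normHermiteFun_eq, ← mul_assoc, sqrt_mul_inv_cancel (by positivity) (hermiteNorm_succ l)]
  simp only [hermiteFunDeriv]
  ring

lemma sqrt_mul_norm_add_three (l : ℕ) (x : ℝ) :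
    Real.sqrt ((2 * l + 2) * (2 * l + 4) * (2 * l + 6)) * normHermiteFun (l + 3) x
      = (hermiteNorm l)⁻¹ * ((4 * x ^ 3 - (6 * l + 8) * x) * hermiteFun l x
          + (-4 * x ^ 2 + 2 * l + 4) * hermiteFunDeriv l x) := by
  rw [normHermiteFun_eq, ← mul_assoc,
    sqrt_mul_inv_cancel (by positivity) (hermiteNorm_add_three l), hermiteFun_three_term (l + 1),
    hermiteFun_three_term l]
  simp only [hermiteFunDeriv]
  push_cast
  ring

lemma hermiteFunDeriv_zero (x : ℝ) : hermiteFunDeriv 0 x = -x * hermiteFun 0 x := by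
  have hs : Real.sqrt 2 ^ 2 = 2 := Real.sq_sqrt (by norm_num)
  simp only [hermiteFunDeriv, hermiteFun, Polynomial.hermite_zero, Polynomial.hermite_one,
    zero_add, pow_one, pow_zero, map_one, Polynomial.aeval_X]
  linear_combination (-x * Real.exp (-x ^ 2 / 2)) * hs

lemma hermiteFunDeriv_succ (n : ℕ) (x : ℝ) :
    hermiteFunDeriv (n + 1) x = (2 * n + 2) * hermiteFun n x - x * hermiteFun (n + 1) x := by
  rw [hermiteFunDeriv, hermiteFun_three_term]
  ring

/-- For `l = 0` the square root vanishes, so the truncated index `l - 1` is harmless, and the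
right-hand side is zero because the lowering operator annihilates `ψ₀`. -/
lemma sqrt_mul_norm_sub_one (l : ℕ) (x : ℝ) :
    Real.sqrt (2 * l) * normHermiteFun (l - 1) x
      = (hermiteNorm l)⁻¹ * (x * hermiteFun l x + hermiteFunDeriv l x) := by
  rcases l with _ | l
  · simp [hermiteFunDeriv_zero]
  · have h : (2 * ((l + 1 : ℕ) : ℝ)) = 2 * l + 2 := by push_cast; ring
    rw [h, Nat.add_sub_cancel, normHermiteFun_eq, ← mul_assoc,
      sqrt_mul_inv_eq_mul (by positivity) (hermiteNorm_succ l), hermiteFunDeriv_succ]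
    ring

/-- As in `sqrt_mul_norm_sub_one`, both sides vanish for `l = 0, 1, 2`. -/
lemma sqrt_mul_norm_sub_three (l : ℕ) (x : ℝ) :
    Real.sqrt ((2 * l) * (2 * l - 2) * (2 * l - 4)) * normHermiteFun (l - 3) x
      = (hermiteNorm l)⁻¹ * ((4 * x ^ 3 - (6 * l - 2) * x) * hermiteFun l x
          + (4 * x ^ 2 - 2 * l + 2) * hermiteFunDeriv l x) := by
  have h0 := hermiteFunDeriv_zero x
  rcases l with _ | _ | _ | l
  · simp only [Nat.cast_zero, h0]
    norm_num
    right
    ring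
  · have h1 := hermiteFunDeriv_succ 0 x
    rw [hermiteFunDeriv] at h0
    have h2 : hermiteFun 1 x = 2 * x * hermiteFun 0 x := by linear_combination -h0
    simp only [zero_add] at h1
    simp only [zero_add, h1, h2]
    norm_num
    right
    ring
  · have h1 := hermiteFunDeriv_succ 1 x
    have h3 := hermiteFun_three_term 0 x
    rw [hermiteFunDeriv] at h0
    have h2 : hermiteFun 1 x = 2 * x * hermiteFun 0 x := by linear_combination -h0
    simp only [zero_add, Nat.reduceAdd] at h1 h3
    simp only [zero_add, Nat.reduceAdd, h1, h3, h2]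
    norm_num
    right
    ring
  · have h : ((2 * ((l + 1 + 1 + 1 : ℕ) : ℝ)) * (2 * ((l + 1 + 1 + 1 : ℕ) : ℝ) - 2)
        * (2 * ((l + 1 + 1 + 1 : ℕ) : ℝ) - 4)) = (2 * l + 2) * (2 * l + 4) * (2 * l + 6) := by
      push_cast; ring
    rw [h, show l + 1 + 1 + 1 - 3 = l by omega, normHermiteFun_eq, ← mul_assoc,
      sqrt_mul_inv_eq_mul (by positivity) (hermiteNorm_add_three l), hermiteFunDeriv_succ,
      show l + 1 + 1 + 1 = l + 1 + 2 by omega, hermiteFun_three_term (l + 1),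
      show l + 1 + 1 = l + 2 by omega, hermiteFun_three_term l]
    push_cast
    ring

/-- Closed form of the corrector: `u = -(ν-1)/6 · (x v + (2l+1-x²) v')`. -/
lemma corrector_eq (ν l : ℕ) (x : ℝ) :
    -((ν : ℝ) - 1) *
      ((1 / 48) *
          Real.sqrt ((2 * (l : ℝ) + 2) * (2 * (l : ℝ) + 4) * (2 * (l : ℝ) + 6))
          * normHermiteFun (l + 3) x
        - (1 / 16) * Real.sqrt (2 * (l : ℝ) + 2) * (2 * (l : ℝ) - 2)
          * normHermiteFun (l + 1) x
        + (1 / 16) * Real.sqrt (2 * (l : ℝ)) * (2 * (l : ℝ) + 4)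
          * normHermiteFun (l - 1) x
        - (1 / 48) *
          Real.sqrt ((2 * (l : ℝ)) * (2 * (l : ℝ) - 2) * (2 * (l : ℝ) - 4))
          * normHermiteFun (l - 3) x)
      = -((ν : ℝ) - 1) / 6 * (hermiteNorm l)⁻¹ *
          (x * hermiteFun l x + (2 * l + 1 - x ^ 2) * hermiteFunDeriv l x) := by
  linear_combination (-((ν : ℝ) - 1)) * ((1 / 48) * sqrt_mul_norm_add_three l x
    - (1 / 16) * (2 * (l : ℝ) - 2) * sqrt_mul_norm_add_one l x
    + (1 / 16) * (2 * (l : ℝ) + 4) * sqrt_mul_norm_sub_one l x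
    - (1 / 48) * sqrt_mul_norm_sub_three l x)

/-- Reduction of the `ω₂` integral to `∫ ψ²`: with `E = 2l+1` and
`c = x³/24 - E(2ν+1)x/48`, the integrand minus `(E²-1)/8 · ψ²` is the derivative of
`a ψ² + b ψ ψ' + c ψ'²`, where `b = -c'` and
`a = (ν-1)/12 · x (x² - E)² + c''/2 - c (x² - E)`. -/
lemma integral_hermiteFun_form (ν : ℝ) (l : ℕ) :
    ∫ x : ℝ, (((7 * ν - 11) / 12 * x ^ 4 - (2 * l + 1) * (ν - 2) / 2 * x ^ 2) * hermiteFun l x ^ 2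
      - (ν - 1) / 6 * (x ^ 3 - (2 * l + 1) * x) *
        (x * hermiteFun l x + (2 * l + 1 - x ^ 2) * hermiteFunDeriv l x) * hermiteFun l x)
      = (l : ℝ) * (l + 1) / 2 * ∫ x, hermiteFun l x ^ 2 := by
  set E : ℝ := 2 * l + 1 with hE
  have hG := isPolyGaussian_hermiteFun l
  have hG' := isPolyGaussian_hermiteFunDeriv l
  have hd : ∀ x, HasDerivAt (fun x : ℝ =>
      ((ν - 1) / 12 * (x * (x ^ 2 - E) ^ 2) + x / 8
        - (x ^ 3 / 24 - E * (2 * ν + 1) / 48 * x) * (x ^ 2 - E)) * hermiteFun l x ^ 2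
      + (E * (2 * ν + 1) / 48 - x ^ 2 / 8) * (hermiteFun l x * hermiteFunDeriv l x)
      + (x ^ 3 / 24 - E * (2 * ν + 1) / 48 * x) * hermiteFunDeriv l x ^ 2)
      ((((7 * ν - 11) / 12 * x ^ 4 - E * (ν - 2) / 2 * x ^ 2) * hermiteFun l x ^ 2
      - (ν - 1) / 6 * (x ^ 3 - E * x) *
        (x * hermiteFun l x + (E - x ^ 2) * hermiteFunDeriv l x) * hermiteFun l x)
      - (l : ℝ) * (l + 1) / 2 * hermiteFun l x ^ 2) x := fun x => by
    have hf := hermiteFun_hasDerivAt l x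
    have hg := hermiteFunDeriv_hasDerivAt l x
    have hi := hasDerivAt_id' x
    have hc := ((hi.pow 3).div_const 24).sub (hi.const_mul (E * (2 * ν + 1) / 48))
    have hq := (hi.pow 2).sub_const E
    have hb := ((hi.pow 2).div_const 8).const_sub (E * (2 * ν + 1) / 48)
    have ha := (((hi.mul (hq.pow 2)).const_mul ((ν - 1) / 12)).add (hi.div_const 8)).sub
      (hc.mul hq)
    refine (((ha.mul (hf.pow 2)).add (hb.mul (hf.mul hg))).add
      (hc.mul (hg.pow 2))).congr_deriv ?_
    simp only [hE, Pi.pow_apply, Pi.mul_apply, Pi.sub_apply, Pi.add_apply]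
    push_cast
    ring
  have i1 : Integrable (fun x : ℝ =>
      (((7 * ν - 11) / 12 * x ^ 4 - E * (ν - 2) / 2 * x ^ 2) * hermiteFun l x ^ 2
      - (ν - 1) / 6 * (x ^ 3 - E * x) *
        (x * hermiteFun l x + (E - x ^ 2) * hermiteFunDeriv l x) * hermiteFun l x)) := by
    open Polynomial in
    refine (hG.integrable hG'
      (C ((7 * ν - 11) / 12) * X ^ 4 - C (E * (ν - 2) / 2) * X ^ 2
        - C ((ν - 1) / 6) * (X ^ 3 - C E * X) * X)
      (-(C ((ν - 1) / 6) * (X ^ 3 - C E * X) * (C E - X ^ 2))) 0).congr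
      (Filter.Eventually.of_forall fun x => ?_)
    simp only [Polynomial.eval_sub, Polynomial.eval_mul, Polynomial.eval_pow,
      Polynomial.eval_X, Polynomial.eval_C, Polynomial.eval_neg, Polynomial.eval_zero]
    ring
  have i2 := (integrable_hermiteFun_sq l).const_mul ((l : ℝ) * (l + 1) / 2)
  have i3 : Integrable (fun x : ℝ =>
      ((ν - 1) / 12 * (x * (x ^ 2 - E) ^ 2) + x / 8
        - (x ^ 3 / 24 - E * (2 * ν + 1) / 48 * x) * (x ^ 2 - E)) * hermiteFun l x ^ 2
      + (E * (2 * ν + 1) / 48 - x ^ 2 / 8) * (hermiteFun l x * hermiteFunDeriv l x)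
      + (x ^ 3 / 24 - E * (2 * ν + 1) / 48 * x) * hermiteFunDeriv l x ^ 2) := by
    open Polynomial in
    refine (hG.integrable hG'
      (C ((ν - 1) / 12) * (X * (X ^ 2 - C E) ^ 2) + C (1 / 8) * X
        - (C (1 / 24) * X ^ 3 - C (E * (2 * ν + 1) / 48) * X) * (X ^ 2 - C E))
      (C (E * (2 * ν + 1) / 48) - C (1 / 8) * X ^ 2)
      (C (1 / 24) * X ^ 3 - C (E * (2 * ν + 1) / 48) * X)).congr
      (Filter.Eventually.of_forall fun x => ?_)
    simp only [Polynomial.eval_add, Polynomial.eval_sub, Polynomial.eval_mul, Polynomial.eval_pow,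
      Polynomial.eval_X, Polynomial.eval_C]
    ring
  have h := integral_eq_zero_of_hasDerivAt_of_integrable hd (i1.sub i2) i3
  rw [integral_sub i1 i2, integral_const_mul] at h
  linarith

/-- The second-order perturbation coefficient
`ω₂ = ½(ν-1)l(l+1)` from the proof of Proposition A.3(i): the explicit
first-order corrector `u` solves `𝐡₀ u + 𝐡₁ v_l = 0` where
`𝐡₀ = -d²/dx² + x² - (2l+1)` and `𝐡₁ = (ν-1)(x³ - (2l+1)x)`, and
`⟨𝐡₂ v_l + 𝐡₁ u, v_l⟩ = ½(ν-1)l(l+1)`, which is strictly positive for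
`l ≥ 1` (coefficients of `vₖ` with `k < 0` vanish, convention `vₖ = 0`). -/
theorem statement16 (ν l : ℕ) (hν : 2 ≤ ν)
    (u : ℝ → ℝ)
    (hu : ∀ x, u x = -((ν : ℝ) - 1) *
      ((1 / 48) *
          Real.sqrt ((2 * (l : ℝ) + 2) * (2 * (l : ℝ) + 4) * (2 * (l : ℝ) + 6))
          * normHermiteFun (l + 3) x
        - (1 / 16) * Real.sqrt (2 * (l : ℝ) + 2) * (2 * (l : ℝ) - 2)
          * normHermiteFun (l + 1) x
        + (1 / 16) * Real.sqrt (2 * (l : ℝ)) * (2 * (l : ℝ) + 4)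
          * normHermiteFun (l - 1) x
        - (1 / 48) *
          Real.sqrt ((2 * (l : ℝ)) * (2 * (l : ℝ) - 2) * (2 * (l : ℝ) - 4))
          * normHermiteFun (l - 3) x)) :
    (∀ x : ℝ,
      -(deriv (deriv u) x) + x ^ 2 * u x - (2 * (l : ℝ) + 1) * u x
        + ((ν : ℝ) - 1) * (x ^ 3 - (2 * (l : ℝ) + 1) * x) * normHermiteFun l x
        = 0) ∧
    (∫ x : ℝ,
        (((ν : ℝ) - 1) * ((7 * (ν : ℝ) - 11) / 12 * x ^ 4
            - (2 * (l : ℝ) + 1) * ((ν : ℝ) - 2) / 2 * x ^ 2)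
            * normHermiteFun l x ^ 2
          + ((ν : ℝ) - 1) * (x ^ 3 - (2 * (l : ℝ) + 1) * x) * u x
            * normHermiteFun l x)
      = (1 / 2) * ((ν : ℝ) - 1) * (l : ℝ) * ((l : ℝ) + 1)) ∧
    (1 ≤ l → 0 < (1 / 2) * ((ν : ℝ) - 1) * (l : ℝ) * ((l : ℝ) + 1)) := by
  have hu' : u = fun x => -((ν : ℝ) - 1) / 6 * (hermiteNorm l)⁻¹ *
      (x * hermiteFun l x + (2 * l + 1 - x ^ 2) * hermiteFunDeriv l x) := by
    ext x
    rw [hu, corrector_eq]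
  refine ⟨fun x => ?_, ?_, fun hl => ?_⟩
  · have hd1 : ∀ y, HasDerivAt u (-((ν : ℝ) - 1) / 6 * (hermiteNorm l)⁻¹ *
        ((1 - (y ^ 2 - (2 * l + 1)) ^ 2) * hermiteFun l y - y * hermiteFunDeriv l y)) y := fun y => by
      rw [hu']
      have hi := hasDerivAt_id' y
      refine (((hi.mul (hermiteFun_hasDerivAt l y)).add
        (((hi.pow 2).const_sub (2 * (l : ℝ) + 1)).mul
          (hermiteFunDeriv_hasDerivAt l y))).const_mul _).congr_deriv ?_
      simp only [Pi.pow_apply]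
      push_cast
      ring
    have hd2 : HasDerivAt (fun y => -((ν : ℝ) - 1) / 6 * (hermiteNorm l)⁻¹ *
        ((1 - (y ^ 2 - (2 * l + 1)) ^ 2) * hermiteFun l y - y * hermiteFunDeriv l y))
        (-((ν : ℝ) - 1) / 6 * (hermiteNorm l)⁻¹ *
          ((-4 * x * (x ^ 2 - (2 * l + 1)) - x * (x ^ 2 - (2 * l + 1))) * hermiteFun l x
            - (x ^ 2 - (2 * l + 1)) ^ 2 * hermiteFunDeriv l x)) x := by
      have hi := hasDerivAt_id' x
      refine (((((((hi.pow 2).sub_const (2 * (l : ℝ) + 1)).pow 2).const_sub 1).mul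
        (hermiteFun_hasDerivAt l x)).sub
          (hi.mul (hermiteFunDeriv_hasDerivAt l x))).const_mul _).congr_deriv ?_
      simp only [Pi.pow_apply]
      push_cast
      ring
    rw [show deriv u = _ from funext fun y => (hd1 y).deriv, hd2.deriv, hu', normHermiteFun_eq]
    ring
  · have hN := (hermiteNorm_pos l).ne'
    have h := integral_hermiteFun_form ν l
    rw [integral_hermiteFun_sq, ← hermiteNorm_sq] at h
    have h2 := integral_const_mul (μ := volume) (((ν : ℝ) - 1) * ((hermiteNorm l)⁻¹) ^ 2)
      (fun x : ℝ => (((7 * (ν : ℝ) - 11) / 12 * x ^ 4 - (2 * l + 1) * ((ν : ℝ) - 2) / 2 * x ^ 2)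
          * hermiteFun l x ^ 2
        - ((ν : ℝ) - 1) / 6 * (x ^ 3 - (2 * l + 1) * x) *
          (x * hermiteFun l x + (2 * l + 1 - x ^ 2) * hermiteFunDeriv l x) * hermiteFun l x))
    rw [h] at h2
    rw [show (1 / 2) * ((ν : ℝ) - 1) * (l : ℝ) * ((l : ℝ) + 1)
      = ((ν : ℝ) - 1) * ((hermiteNorm l)⁻¹) ^ 2 * ((l : ℝ) * (l + 1) / 2 * hermiteNorm l ^ 2) by
        field_simp, ← h2]
    congr 1
    ext x
    rw [hu', normHermiteFun_eq]
    ring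
  · have h1 : (2 : ℝ) ≤ ν := by exact_mod_cast hν
    have h2 : (1 : ℝ) ≤ l := by exact_mod_cast hl
    have h3 : (0 : ℝ) < (ν : ℝ) - 1 := by linarith
    positivity
end
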